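/- Let n ≥ 5 be an integer, g(u) = u - u^(1-4/n) for u > 0, and G(u) = u²/2 - (n/(2n-4)) u^(2-4/n) + 1/(n-2) (so G' = g and G(1) = 0). Then for every u > 0 with u ≠ 1 one has H(u) := g(u)² - 2 G(u) g'(u) + (g''(1)/(3 g'(1)²)) g(u)³ > 0, where g'(1) = 4/n and g''(1) = (4/n)(1-4/n). -/

import Mathlib

open Real

/-- The antiderivative `G(u) = u²/2 - (n/(2n-4)) u^(2-4/n) + 1/(n-2)` of
`g(u) = u - u^(1-4/n)` vanishing at `u = 1`. -/
noncomputable def derdzG (n : ℕ) (u : ℝ) : ℝ :=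
  u ^ 2 / 2 - ((n : ℝ) / (2 * (n : ℝ) - 4)) * u ^ (2 - 4 / (n : ℝ)) + 1 / ((n : ℝ) - 2)

/-- The function `g(u) = u - u^(1-4/n)`. -/
noncomputable def derdzg (n : ℕ) (u : ℝ) : ℝ :=
  u - u ^ (1 - 4 / (n : ℝ))

/-!
Put `a = 4 / n ∈ (0, 1)`, so that `g(x) = x - x^(1-a)`. Since `H(1) = 0`, it suffices that `H'` has
the sign of `x - 1`. Up to a positive factor, `H'` is `K = x^(1+a) g² g' - 2a² G`, again zero
at `1`, and `K' = g L` for a combination `L` of powers of `x`. Let `c = (1-a)^(1/a) < 1` be the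
zero of `g'`. On `[c, ∞)` the function `L` is convex with `L(c) < 0 = L(1)`, so `L` has the sign
of `x - 1` there; so has `g`, whence `K` increases through `1`. To the left of `c` one has `g' < 0`
and `G > 0`, so both terms of `K` are negative.
-/

/-- The force `g(x) = x - x^(1-a)` in `f'' + g(f) = 0`, for a real exponent `a` in place of
`4 / n`. -/
noncomputable def powForce (a x : ℝ) : ℝ :=
  x - x ^ (1 - a)

/-- The derivative `g'` of `powForce`, in closed form. -/
noncomputable def powForceDeriv (a x : ℝ) : ℝ :=
  1 - (1 - a) * x ^ (-a)

/-- The potential `G` of `powForce`: its antiderivative vanishing at `1`. -/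
noncomputable def powPotential (a x : ℝ) : ℝ :=
  x ^ 2 / 2 - x ^ (2 - a) / (2 - a) + a / (2 * (2 - a))

/-- The Chow–Wang criterion function `H` of `powForce`; its last coefficient is
`g''(1) / (3 g'(1)²)`. -/
noncomputable def powChowWang (a x : ℝ) : ℝ :=
  powForce a x ^ 2 - 2 * powPotential a x * powForceDeriv a x
    + a * (1 - a) / (3 * a ^ 2) * powForce a x ^ 3

/-- The function `K` carrying the sign of `H'`, from which it differs by the
factor `(1 - a) / a * x ^ (-a - 1)`. -/
noncomputable def powReduced (a x : ℝ) : ℝ :=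
  x ^ (1 + a) * powForce a x ^ 2 * powForceDeriv a x - 2 * a ^ 2 * powPotential a x

/-- The cofactor `L` in the factorization `K' = g L`. -/
noncomputable def powCofactor (a x : ℝ) : ℝ :=
  (3 + a) * x ^ (1 + a) - (6 - 4 * a) * x + (1 - a) * (3 - 2 * a) * x ^ (1 - a) - 2 * a ^ 2

/-- The zero `c` of `powForceDeriv a` on `(0, ∞)`, for `0 < a < 1`. -/
noncomputable def forceCrit (a : ℝ) : ℝ :=
  (1 - a) ^ a⁻¹

theorem neg_of_convexOn_of_neg_of_eq_zero {s : Set ℝ} {f : ℝ → ℝ} {x y z : ℝ}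
    (hf : ConvexOn ℝ s f) (hx : x ∈ s) (hz : z ∈ s) (hfx : f x < 0) (hfz : f z = 0)
    (hxy : x ≤ y) (hyz : y < z) : f y < 0 := by
  rcases hxy.eq_or_lt with rfl | hxy
  · exact hfx
  by_contra! hfy
  have hy : y ∈ openSegment ℝ x z := Ioo_subset_openSegment ⟨hxy, hyz⟩
  exact (hfz ▸ hf.lt_right_of_left_lt hx hz hy (hfx.trans_le hfy)).not_ge hfy

theorem pos_of_convexOn_of_neg_of_eq_zero {s : Set ℝ} {f : ℝ → ℝ} {x y z : ℝ}
    (hf : ConvexOn ℝ s f) (hx : x ∈ s) (hz : z ∈ s) (hfx : f x < 0) (hfy : f y = 0)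
    (hxy : x < y) (hyz : y < z) : 0 < f z :=
  hfy ▸ hf.lt_right_of_left_lt hx hz (Ioo_subset_openSegment ⟨hxy, hyz⟩) (hfy ▸ hfx)

theorem strictMonoOn_of_hasDerivAt_pos {D : Set ℝ} (hD : Convex ℝ D) {f f' : ℝ → ℝ}
    (hf : ∀ x ∈ D, HasDerivAt f (f' x) x) (hf' : ∀ x ∈ interior D, 0 < f' x) :
    StrictMonoOn f D :=
  strictMonoOn_of_hasDerivWithinAt_pos hD (HasDerivAt.continuousOn hf)
    (fun x hx => (hf x (interior_subset hx)).hasDerivWithinAt) hf'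

theorem strictAntiOn_of_hasDerivAt_neg {D : Set ℝ} (hD : Convex ℝ D) {f f' : ℝ → ℝ}
    (hf : ∀ x ∈ D, HasDerivAt f (f' x) x) (hf' : ∀ x ∈ interior D, f' x < 0) :
    StrictAntiOn f D :=
  strictAntiOn_of_hasDerivWithinAt_neg hD (HasDerivAt.continuousOn hf)
    (fun x hx => (hf x (interior_subset hx)).hasDerivWithinAt) hf'

theorem hasDerivAt_chowWang {g g' G : ℝ → ℝ} {g'' x : ℝ} (c : ℝ)
    (hG : HasDerivAt G (g x) x) (hg : HasDerivAt g (g' x) x) (hg' : HasDerivAt g' g'' x) :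
    HasDerivAt (fun y => g y ^ 2 - 2 * G y * g' y + c * g y ^ 3)
      (3 * c * g x ^ 2 * g' x - 2 * G x * g'') x := by
  refine (((hg.pow 2).sub ((hG.const_mul 2).mul hg')).add
    ((hg.pow 3).const_mul c)).congr_deriv ?_
  push_cast
  ring

section Derivatives

variable {a x : ℝ}

theorem hasDerivAt_powForce (hx : x ≠ 0) :
    HasDerivAt (powForce a) (powForceDeriv a x) x := by
  refine ((hasDerivAt_id x).sub (hasDerivAt_rpow_const (.inl hx))).congr_deriv ?_
  rw [powForceDeriv, sub_sub_cancel_left]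

theorem hasDerivAt_powForceDeriv (hx : x ≠ 0) :
    HasDerivAt (powForceDeriv a) (a * (1 - a) * x ^ (-a - 1)) x := by
  refine (((hasDerivAt_rpow_const (.inl hx)).const_mul (1 - a)).const_sub 1).congr_deriv ?_
  ring

theorem hasDerivAt_powPotential (ha : a ≠ 2) (hx : x ≠ 0) :
    HasDerivAt (powPotential a) (powForce a x) x := by
  have ha' : 2 - a ≠ 0 := sub_ne_zero.2 ha.symm
  refine ((((hasDerivAt_id x).pow 2).div_const 2).sub
    ((hasDerivAt_rpow_const (.inl hx)).div_const (2 - a))).add_const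
      (a / (2 * (2 - a))) |>.congr_deriv ?_
  rw [powForce, mul_div_cancel_left₀ _ ha', show 2 - a - 1 = 1 - a by ring]
  simp

theorem hasDerivAt_powChowWang (ha : a ≠ 0) (ha2 : a ≠ 2) (hx : 0 < x) :
    HasDerivAt (powChowWang a) ((1 - a) / a * x ^ (-a - 1) * powReduced a x) x := by
  refine (hasDerivAt_chowWang _ (hasDerivAt_powPotential ha2 hx.ne')
    (hasDerivAt_powForce hx.ne') (hasDerivAt_powForceDeriv hx.ne')).congr_deriv ?_
  have hcancel : x ^ (-a - 1) * x ^ (1 + a) = 1 := by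
    rw [← rpow_add hx, show -a - 1 + (1 + a) = 0 by ring, rpow_zero]
  rw [powReduced]
  field_simp
  linear_combination (-(powForce a x ^ 2 * powForceDeriv a x * (1 - a))) * hcancel

theorem hasDerivAt_powReduced (ha : a ≠ 2) (hx : 0 < x) :
    HasDerivAt (powReduced a) (powForce a x * powCofactor a x) x := by
  have hw : x ^ a ≠ 0 := (rpow_pos_of_pos hx a).ne'
  refine ((((hasDerivAt_rpow_const (.inl hx.ne')).mul ((hasDerivAt_powForce hx.ne').pow 2)).mul
    (hasDerivAt_powForceDeriv hx.ne')).sub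
      ((hasDerivAt_powPotential ha hx.ne').const_mul (2 * a ^ 2))).congr_deriv ?_
  simp only [powForce, powForceDeriv, powCofactor, Pi.mul_apply, Pi.pow_apply, Nat.cast_ofNat,
    Nat.add_one_sub_one, pow_one, rpow_add hx, rpow_sub hx, rpow_neg hx.le, rpow_one]
  field_simp
  ring

theorem hasDerivAt_powCofactor (hx : x ≠ 0) :
    HasDerivAt (powCofactor a) ((1 + a) * (3 + a) * x ^ a - (6 - 4 * a)
      + (1 - a) ^ 2 * (3 - 2 * a) * x ^ (-a)) x := by
  refine (((((hasDerivAt_rpow_const (.inl hx)).const_mul (3 + a)).sub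
    ((hasDerivAt_id x).const_mul (6 - 4 * a))).add
      ((hasDerivAt_rpow_const (.inl hx)).const_mul ((1 - a) * (3 - 2 * a)))).sub_const
        (2 * a ^ 2)).congr_deriv ?_
  rw [add_sub_cancel_left, sub_sub_cancel_left]
  ring

theorem hasDerivAt_deriv_powCofactor (hx : 0 < x) :
    HasDerivAt (fun y => (1 + a) * (3 + a) * y ^ a - (6 - 4 * a)
        + (1 - a) ^ 2 * (3 - 2 * a) * y ^ (-a))
      (a * x ^ (-a - 1) * ((1 + a) * (3 + a) * (x ^ a) ^ 2 - (1 - a) ^ 2 * (3 - 2 * a))) x := by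
  have hw : x ^ a ≠ 0 := (rpow_pos_of_pos hx a).ne'
  refine ((((hasDerivAt_rpow_const (.inl hx.ne')).const_mul ((1 + a) * (3 + a))).sub_const
    (6 - 4 * a)).add ((hasDerivAt_rpow_const (.inl hx.ne')).const_mul
      ((1 - a) ^ 2 * (3 - 2 * a)))).congr_deriv ?_
  simp only [rpow_sub hx, rpow_neg hx.le, rpow_one]
  field_simp
  ring

end Derivatives

section Signs

variable {a x : ℝ}

theorem powForce_one : powForce a 1 = 0 := by
  simp [powForce]

theorem powPotential_one (ha : a ≠ 2) : powPotential a 1 = 0 := by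
  have ha' : 2 - a ≠ 0 := sub_ne_zero.2 ha.symm
  rw [powPotential, one_rpow]
  field_simp
  ring

theorem powChowWang_one (ha : a ≠ 2) : powChowWang a 1 = 0 := by
  simp [powChowWang, powForce_one, powPotential_one ha]

theorem powReduced_one (ha : a ≠ 2) : powReduced a 1 = 0 := by
  simp [powReduced, powForce_one, powPotential_one ha]

theorem powCofactor_one : powCofactor a 1 = 0 := by
  simp only [powCofactor, one_rpow]
  ring

theorem powForce_pos (ha : 0 < a) (hx : 1 < x) : 0 < powForce a x :=
  sub_pos.2 ((rpow_lt_rpow_of_exponent_lt hx (sub_lt_self 1 ha)).trans_eq (rpow_one x))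

theorem powForce_neg (ha : 0 < a) (hx : 0 < x) (hx1 : x < 1) : powForce a x < 0 :=
  sub_neg.2 ((rpow_one x).symm.trans_lt
    (rpow_lt_rpow_of_exponent_gt hx hx1 (sub_lt_self 1 ha)))

theorem powPotential_pos (ha : 0 < a) (ha2 : a ≠ 2) (hx : 0 < x) (hx1 : x < 1) :
    0 < powPotential a x := by
  have hanti : StrictAntiOn (powPotential a) (Set.Ioc 0 1) :=
    strictAntiOn_of_hasDerivAt_neg (convex_Ioc 0 1)
      (fun y hy => hasDerivAt_powPotential ha2 hy.1.ne') fun y hy => by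
        rw [interior_Ioc] at hy
        exact powForce_neg ha hy.1 hy.2
  exact powPotential_one ha2 ▸ hanti ⟨hx, hx1.le⟩ ⟨one_pos, le_rfl⟩ hx1

theorem forceCrit_pos (ha : a < 1) : 0 < forceCrit a :=
  rpow_pos_of_pos (sub_pos.2 ha) _

theorem forceCrit_lt_one (ha : 0 < a) (ha1 : a < 1) : forceCrit a < 1 :=
  rpow_lt_one (sub_pos.2 ha1).le (sub_lt_self 1 ha) (inv_pos.2 ha)

theorem forceCrit_le_iff (ha : 0 < a) (ha1 : a ≤ 1) (hx : 0 ≤ x) :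
    forceCrit a ≤ x ↔ 1 - a ≤ x ^ a :=
  rpow_inv_le_iff_of_pos (sub_nonneg.2 ha1) hx ha

theorem powForceDeriv_neg (ha : 0 < a) (ha1 : a ≤ 1) (hx : 0 < x) (hxc : x < forceCrit a) :
    powForceDeriv a x < 0 := by
  have hw : x ^ a < 1 - a := lt_of_not_ge ((forceCrit_le_iff ha ha1 hx.le).not.1 hxc.not_ge)
  rw [powForceDeriv, rpow_neg hx.le, ← div_eq_mul_inv, sub_neg]
  exact (one_lt_div (rpow_pos_of_pos hx a)).2 hw

theorem convexOn_powCofactor (ha : 0 < a) (ha1 : a < 1) :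
    ConvexOn ℝ (Set.Ici (forceCrit a)) (powCofactor a) := by
  have hpos : ∀ y ∈ Set.Ici (forceCrit a), 0 < y := fun y hy => (forceCrit_pos ha1).trans_le hy
  have hsub := interior_subset (s := Set.Ici (forceCrit a))
  refine convexOn_of_hasDerivWithinAt2_nonneg (convex_Ici _)
    (HasDerivAt.continuousOn fun y hy => hasDerivAt_powCofactor (hpos y hy).ne')
    (fun y hy => (hasDerivAt_powCofactor (hpos y (hsub hy)).ne').hasDerivWithinAt)
    (fun y hy => (hasDerivAt_deriv_powCofactor (hpos y (hsub hy))).hasDerivWithinAt)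
    fun y hy => ?_
  have hy0 : 0 < y := hpos y (hsub hy)
  have hw : (1 - a) ^ 2 ≤ (y ^ a) ^ 2 :=
    pow_le_pow_left₀ (sub_pos.2 ha1).le ((forceCrit_le_iff ha ha1.le hy0.le).1 (hsub hy)) 2
  have hcoeff : 3 - 2 * a ≤ (1 + a) * (3 + a) := by nlinarith
  have hmain : (1 - a) ^ 2 * (3 - 2 * a) ≤ (1 + a) * (3 + a) * (y ^ a) ^ 2 := by
    rw [mul_comm]
    exact mul_le_mul hcoeff hw (sq_nonneg _) (by positivity)
  exact mul_nonneg (by positivity) (sub_nonneg.2 hmain)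

theorem powCofactor_forceCrit_neg (ha : 0 < a) (ha1 : a < 1) :
    powCofactor a (forceCrit a) < 0 := by
  have hc := forceCrit_pos ha1
  have hb : 1 - a ≠ 0 := (sub_pos.2 ha1).ne'
  have hw : forceCrit a ^ a = 1 - a := rpow_inv_rpow (sub_pos.2 ha1).le ha.ne'
  calc powCofactor a (forceCrit a) = -(a ^ 2 * (forceCrit a + 2)) := by
        rw [powCofactor, rpow_add hc, rpow_sub hc, rpow_one, hw]
        field_simp
        ring
    _ < 0 := neg_neg_of_pos (by positivity)

theorem powCofactor_neg (ha : 0 < a) (ha1 : a < 1) (hxc : forceCrit a ≤ x) (hx1 : x < 1) :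
    powCofactor a x < 0 :=
  neg_of_convexOn_of_neg_of_eq_zero (convexOn_powCofactor ha ha1) Set.self_mem_Ici
    (forceCrit_lt_one ha ha1).le (powCofactor_forceCrit_neg ha ha1) powCofactor_one hxc hx1

theorem powCofactor_pos (ha : 0 < a) (ha1 : a < 1) (hx : 1 < x) : 0 < powCofactor a x :=
  have hc := forceCrit_lt_one ha ha1
  pos_of_convexOn_of_neg_of_eq_zero (convexOn_powCofactor ha ha1) Set.self_mem_Ici
    (hc.trans hx).le (powCofactor_forceCrit_neg ha ha1) powCofactor_one hc hx

theorem powReduced_pos (ha : 0 < a) (ha1 : a < 1) (hx : 1 < x) : 0 < powReduced a x := by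
  have ha2 : a ≠ 2 := by linarith
  have hmono : StrictMonoOn (powReduced a) (Set.Ici 1) :=
    strictMonoOn_of_hasDerivAt_pos (convex_Ici 1)
      (fun y hy => hasDerivAt_powReduced ha2 (one_pos.trans_le hy)) fun y hy => by
        rw [interior_Ici] at hy
        exact mul_pos (powForce_pos ha hy) (powCofactor_pos ha ha1 hy)
  exact powReduced_one ha2 ▸ hmono Set.self_mem_Ici hx.le hx

theorem powReduced_neg_of_forceCrit_le (ha : 0 < a) (ha1 : a < 1) (hxc : forceCrit a ≤ x)
    (hx1 : x < 1) : powReduced a x < 0 := by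
  have ha2 : a ≠ 2 := by linarith
  have hc := forceCrit_pos ha1
  have hmono : StrictMonoOn (powReduced a) (Set.Icc (forceCrit a) 1) :=
    strictMonoOn_of_hasDerivAt_pos (convex_Icc _ 1)
      (fun y hy => hasDerivAt_powReduced ha2 (hc.trans_le hy.1)) fun y hy => by
        rw [interior_Icc] at hy
        exact mul_pos_of_neg_of_neg (powForce_neg ha (hc.trans hy.1) hy.2)
          (powCofactor_neg ha ha1 hy.1.le hy.2)
  exact powReduced_one ha2 ▸
    hmono ⟨hxc, hx1.le⟩ ⟨(forceCrit_lt_one ha ha1).le, le_rfl⟩ hx1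

theorem powReduced_neg_of_lt_forceCrit (ha : 0 < a) (ha1 : a < 1) (hx : 0 < x)
    (hxc : x < forceCrit a) : powReduced a x < 0 := by
  have hG : 0 < powPotential a x :=
    powPotential_pos ha (by linarith) hx (hxc.trans (forceCrit_lt_one ha ha1))
  have hg' : powForceDeriv a x < 0 := powForceDeriv_neg ha ha1.le hx hxc
  exact sub_neg.2 ((mul_nonpos_of_nonneg_of_nonpos (by positivity) hg'.le).trans_lt
    (by positivity))

theorem powReduced_neg (ha : 0 < a) (ha1 : a < 1) (hx : 0 < x) (hx1 : x < 1) :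
    powReduced a x < 0 :=
  (lt_or_ge x (forceCrit a)).elim (powReduced_neg_of_lt_forceCrit ha ha1 hx)
    (powReduced_neg_of_forceCrit_le ha ha1 · hx1)

theorem strictAntiOn_powChowWang (ha : 0 < a) (ha1 : a < 1) :
    StrictAntiOn (powChowWang a) (Set.Ioc 0 1) :=
  strictAntiOn_of_hasDerivAt_neg (convex_Ioc 0 1)
    (fun y hy => hasDerivAt_powChowWang ha.ne' (by linarith) hy.1) fun y hy => by
      rw [interior_Ioc] at hy
      have hpow := rpow_pos_of_pos hy.1 (-a - 1)
      have : 0 < 1 - a := sub_pos.2 ha1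
      exact mul_neg_of_pos_of_neg (by positivity) (powReduced_neg ha ha1 hy.1 hy.2)

theorem strictMonoOn_powChowWang (ha : 0 < a) (ha1 : a < 1) :
    StrictMonoOn (powChowWang a) (Set.Ici 1) :=
  strictMonoOn_of_hasDerivAt_pos (convex_Ici 1)
    (fun y hy => hasDerivAt_powChowWang ha.ne' (by linarith) (one_pos.trans_le hy))
    fun y hy => by
      rw [interior_Ici] at hy
      have hpow := rpow_pos_of_pos (one_pos.trans hy) (-a - 1)
      have : 0 < 1 - a := sub_pos.2 ha1
      exact mul_pos (by positivity) (powReduced_pos ha ha1 hy)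

end Signs

theorem chow_wang_H_positive_general {a u : ℝ} (ha : 0 < a) (ha1 : a < 1) (hu : 0 < u)
    (hu1 : u ≠ 1) : 0 < powChowWang a u := by
  rw [← powChowWang_one (a := a) (by linarith)]
  rcases hu1.lt_or_gt with hlt | hgt
  · exact strictAntiOn_powChowWang ha ha1 ⟨hu, hlt.le⟩ ⟨one_pos, le_rfl⟩ hlt
  · exact strictMonoOn_powChowWang ha ha1 Set.self_mem_Ici hgt.le hgt

theorem derdzG_eq_powPotential {n : ℕ} (hn0 : n ≠ 0) (hn2 : n ≠ 2) :
    derdzG n = powPotential (4 / n) := by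
  have h0 : (n : ℝ) ≠ 0 := by exact_mod_cast hn0
  have h2 : (n : ℝ) - 2 ≠ 0 := sub_ne_zero.2 (by exact_mod_cast hn2)
  have hexp : 2 - 4 / (n : ℝ) = 2 * (n - 2) / n := by
    field_simp
    ring
  ext u
  rw [derdzG, powPotential]
  generalize u ^ (2 - 4 / (n : ℝ)) = p
  rw [hexp, show 2 * (n : ℝ) - 4 = 2 * (n - 2) by ring]
  field_simp
  ring

/-- For `n ≥ 5`, `g(u) = u - u^(1-4/n)`, `G` its antiderivative vanishing
at `1`, `g'(1) = 4/n` and `g''(1) = (4/n)(1-4/n)`, the Chow–Wang criterion function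
`H(u) = g(u)² - 2 G(u) g'(u) + (g''(1)/(3 g'(1)²)) g(u)³` is positive for `u > 0`, `u ≠ 1`,
where `g'(u) = 1 - (1-4/n) u^(-4/n)`. -/
theorem chow_wang_H_positive
    (n : ℕ) (hn : 5 ≤ n) (u : ℝ) (hu : 0 < u) (hu1 : u ≠ 1) :
    0 < derdzg n u ^ 2
      - 2 * derdzG n u * (1 - (1 - 4 / (n : ℝ)) * u ^ (-(4 / (n : ℝ))))
      + (((4 / (n : ℝ)) * (1 - 4 / (n : ℝ))) / (3 * (4 / (n : ℝ)) ^ 2)) * derdzg n u ^ 3 := by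
  have hn4 : (4 : ℝ) < n := by exact_mod_cast hn
  rw [derdzG_eq_powPotential (by lia) (by lia)]
  exact chow_wang_H_positive_general (by positivity) ((div_lt_one (by linarith)).2 hn4) hu hu1
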